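/- Let I ⊂ [−1, 1] be a closed interval of positive length |I|. For every ε > 0 there exists N = N(I, ε) such that for every integer n ≥ N and every choice of distinct nodes x_1 < … < x_n in [−1, 1], one has ∫_I λ(x) dx ≥ (4·|I|/π²)·log n − ε·log n, where λ is the Lebesgue function associated to these nodes. -/

import Mathlib

/-!
Write `P(t) = ∏ (t - x_i)` and `b_k = 1 / |P'(x_k)|`, so that `|ℓ_k(t)| |t - x_k| = |P(t)| b_k`
(`abs_basis_mul`).

The core of the proof is a local product inequality (`cell_lower_bound`): on an interval `W` of
length `H` whose nodes are dense at scale `H / M`,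
`(∫_W |P|) (∑_{x_k ∈ W} b_k) ≥ (1 - ε) (2 / π²) H²`.
Inside a gap `(x_k, x_{k+1})` of length `d`, at relative position `s`, every other node contributes a
nonnegative concavity defect of `log` to `log |P|`, which gives (`gap_lower_bound`)
`|P| ((1 - s) b_k + s b_{k+1}) ≥ d s (1 - s) exp(defect)`.
The defect of a node at distance `p` from a gap of length `d` depends convexly on `p / d`, so its mean
over the gaps, weighted by their lengths, is up to boundary terms smallest for equally spaced nodes
(`logDefect_tangent`, `sum_gapDefect`). For these, `s (1 - s) exp(defect)` is a partial Euler product,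
bounded below by nearly `sin (π s) / π` (`uniform_ge_sin`). Cauchy–Schwarz over the gaps and
integration over `s`, with `∫₀¹ sin (π s) / π = 2 / π²`, give the inequality (`run_lower_bound`).

Now split `[a, b]` into `S = ⌊n^{1-δ}⌋` cells of length `H`, with `A_s = ∫ |P|` and `B_s = ∑ b_k` over
the `s`-th cell. If every interval of length `H / M` in `[a, b]` contains a node, then
`∫ λ ≥ ∑_{s,s'} A_s B_{s'} / ((|s - s'| + 1) H)`. Pairing `(s, s')` with `(s', s)`, the bounds on
`A_s B_s` and `A_{s'} B_{s'}` and the inequality of the means control the cross terms, and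
`∑_{s,s'} 1 / (|s - s'| + 1) ≥ 2 S log S - 3 S` produces the logarithm (`integral_ge_of_dense`).
If instead some interval of length `H / M` is free of nodes, then interpolating a Chebyshev
polynomial composed with a quadratic that peaks at a point of this interval shows that `λ` is
exponentially large there (`cosh_le_lebesgueFn`, `integral_ge_of_gap`).
-/

open Real

/-! ### Concavity defect of the logarithm -/

/-- The concavity defect of `log` at the point `p + s d` of the segment `[p, p + d]`. -/
noncomputable def logDefect (s p d : ℝ) : ℝ :=
  log (p + s * d) - (1 - s) * log p - s * log (p + d)

lemma logDefect_nonneg {s p d : ℝ} (hs0 : 0 ≤ s) (hs1 : s ≤ 1) (hp : 0 < p) (hd : 0 ≤ d) :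
    0 ≤ logDefect s p d := by
  have h := strictConcaveOn_log_Ioi.concaveOn.2 (show p ∈ Set.Ioi (0:ℝ) from hp)
    (show p + d ∈ Set.Ioi (0:ℝ) from by simp only [Set.mem_Ioi]; linarith)
    (sub_nonneg.2 hs1) hs0 (by ring)
  simp only [smul_eq_mul] at h
  rw [show (1 - s) * p + s * (p + d) = p + s * d by ring] at h
  unfold logDefect; linarith

lemma logDefect_le_one {s j : ℝ} (hs0 : 0 ≤ s) (hs1 : s ≤ 1) (hj : 1 ≤ j) :
    logDefect s j 1 ≤ 1 := by
  have h1 : log (j + s * 1) ≤ log (j + 1) := log_le_log (by linarith) (by linarith)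
  have h2 : log (j + 1) - log j ≤ 1 := by
    rw [← log_div (by linarith) (by linarith)]
    have := log_le_sub_one_of_pos (show 0 < (j + 1) / j by positivity)
    have h3 : (j + 1) / j ≤ 2 := by rw [div_le_iff₀ (by linarith)]; linarith
    linarith
  have h4 : log j ≤ log (j + 1) := log_le_log (by linarith) (by linarith)
  unfold logDefect; nlinarith

lemma hasDerivAt_logDefect {s u : ℝ} (hs0 : 0 < s) (hu : 0 < u) :
    HasDerivAt (fun u => logDefect s u 1) (-(s * (1 - s) / (u * (u + 1) * (u + s)))) u := by
  have h1 : HasDerivAt (fun u : ℝ => log (u + s * 1)) (1 / (u + s * 1)) u :=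
    ((hasDerivAt_id u).add_const (s * 1)).log (by simp; linarith)
  have h2 : HasDerivAt (fun u : ℝ => log u) (1 / u) u := by
    simpa using hasDerivAt_log hu.ne'
  have h3 : HasDerivAt (fun u : ℝ => log (u + 1)) (1 / (u + 1)) u :=
    ((hasDerivAt_id u).add_const 1).log (by simp; linarith)
  refine ((h1.sub (h2.const_mul (1 - s))).sub (h3.const_mul s)).congr_deriv ?_
  have : u + s ≠ 0 := by linarith
  have : u + 1 ≠ 0 := by linarith
  have : u + s * 1 ≠ 0 := by linarith
  field_simp
  ring

/-- Tangent-line bound for the perspective `d * logDefect s (p / d) 1` at the ray `p = j d`. -/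
lemma logDefect_tangent {s p d j : ℝ} (hs0 : 0 < s) (hs1 : s < 1) (hp : 0 < p) (hd : 0 < d)
    (hj : 0 < j) :
    d * logDefect s j 1 - s * (1 - s) / (j * (j + 1) * (j + s)) * (p - j * d)
      ≤ d * logDefect s p d := by
  have hc : ConvexOn ℝ (Set.Ioi (0:ℝ)) (fun u => logDefect s u 1) := by
    refine MonotoneOn.convexOn_of_deriv (convex_Ioi 0) ?_ ?_ ?_
    · exact fun u hu => (hasDerivAt_logDefect hs0 hu).continuousAt.continuousWithinAt
    · intro u hu
      rw [interior_Ioi] at hu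
      exact (hasDerivAt_logDefect hs0 hu).differentiableAt.differentiableWithinAt
    · rw [interior_Ioi]
      intro u hu v hv huv
      simp only [Set.mem_Ioi] at hu hv
      rw [(hasDerivAt_logDefect hs0 hu).deriv, (hasDerivAt_logDefect hs0 hv).deriv]
      have : 0 < 1 - s := by linarith
      apply neg_le_neg
      gcongr
  have hscale : logDefect s p d = logDefect s (p / d) 1 := by
    unfold logDefect
    have e1 : p / d + s * 1 = (p + s * d) / d := by field_simp
    have e2 : p / d + 1 = (p + d) / d := by field_simp
    rw [e1, e2, log_div (by positivity) hd.ne', log_div hp.ne' hd.ne',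
      log_div (by positivity) hd.ne']
    ring
  set c := s * (1 - s) / (j * (j + 1) * (j + s)) with hcdef
  have key : logDefect s j 1 - c * (p / d - j) ≤ logDefect s (p / d) 1 := by
    have hpd : 0 < p / d := by positivity
    rcases lt_trichotomy j (p / d) with h | h | h
    · have := hc.le_slope_of_hasDerivAt (x := j) (y := p / d) hj hpd h (hasDerivAt_logDefect hs0 hj)
      rw [slope_def_field, le_div_iff₀ (by linarith)] at this
      linarith
    · rw [← h]; simp
    · have := hc.slope_le_of_hasDerivAt (x := p / d) (y := j) hpd hj h (hasDerivAt_logDefect hs0 hj)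
      rw [slope_def_field, div_le_iff₀ (by linarith)] at this
      linarith
  rw [hscale]
  have := mul_le_mul_of_nonneg_left key hd.le
  calc _ = d * (logDefect s j 1 - c * (p / d - j)) := by field_simp
    _ ≤ _ := this

/-! ### Mean defect over the gaps -/

section Offsets
variable {y : ℕ → ℝ} {Z j : ℕ} {η s : ℝ}

lemma sub_zero_le_of_gaps (hη : ∀ k < Z, y (k + 1) - y k ≤ η) (hj : j ≤ Z) :
    y j - y 0 ≤ j * η := by
  rw [← Finset.sum_range_sub y j]
  calc _ ≤ ∑ _k ∈ Finset.range j, η :=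
        Finset.sum_le_sum fun k hk => hη k (lt_of_lt_of_le (Finset.mem_range.1 hk) hj)
    _ = _ := by simp

/-- Spans of `j` consecutive gaps add up to at most `j` times the total length. -/
lemma sum_spans_le (hy : ∀ i k, i < k → k ≤ Z → y i < y k) (hj : j ≤ Z) :
    ∑ k ∈ Finset.range (Z - j), (y (k + j) - y k) ≤ j * (y Z - y 0) := by
  have h1 : ∀ k, y (k + j) - y k = ∑ i ∈ Finset.range j, (y (k + (i + 1)) - y (k + i)) := by
    intro k; rw [Finset.sum_range_sub (fun i => y (k + i))]; simp
  simp_rw [h1]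
  rw [Finset.sum_comm]
  calc _ ≤ ∑ _i ∈ Finset.range j, (y Z - y 0) := by
        refine Finset.sum_le_sum fun i hi => ?_
        have hi' := Finset.mem_range.1 hi
        have h2 : ∑ k ∈ Finset.range (Z - j), (y (k + (i + 1)) - y (k + i)) =
            y (Z - j + i) - y i := by
          have := Finset.sum_range_sub (fun k => y (k + i)) (Z - j)
          simp only [zero_add] at this
          rw [← this]
          refine Finset.sum_congr rfl fun k _ => ?_
          rw [show k + (i + 1) = k + 1 + i by ring]
        rw [h2]
        have h3 : y (Z - j + i) ≤ y Z := (hy _ _ (by omega) le_rfl).le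
        have h4 : y 0 ≤ y i := by
          rcases Nat.eq_zero_or_pos i with h | h
          · rw [h]
          · exact (hy _ _ h (by omega)).le
        linarith
    _ = _ := by rw [Finset.sum_const, Finset.card_range, nsmul_eq_mul]

/-- Averaged over all gaps, the defect caused by the `j`-th neighbour on the left is, up to a
boundary term, at least the one for equally spaced nodes. -/
lemma sum_logDefect_left (hs0 : 0 < s) (hs1 : s < 1)
    (hy : ∀ i k, i < k → k ≤ Z → y i < y k) (hη0 : 0 ≤ η)
    (hη : ∀ k < Z, y (k + 1) - y k ≤ η) (hj1 : 1 ≤ j) (hj : j ≤ Z) :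
    (y Z - y 0) * logDefect s j 1 - 2 * (j : ℝ) ^ 2 * η ≤
      ∑ k ∈ Finset.range (Z - j), (y (k + j + 1) - y (k + j)) *
        logDefect s (y (k + j) - y k) (y (k + j + 1) - y (k + j)) := by
  have hjR : (1 : ℝ) ≤ j := by exact_mod_cast hj1
  set c := s * (1 - s) / ((j : ℝ) * (j + 1) * (j + s)) with hc
  have h1s : 0 < 1 - s := by linarith
  have hc0 : 0 ≤ c := by positivity
  have hc1 : c ≤ 1 := by
    rw [hc, div_le_one (by positivity)]
    have : 1 ≤ (j : ℝ) * (j + 1) * (j + s) := by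
      have h1 : 1 ≤ (j : ℝ) * (j + 1) := by nlinarith
      nlinarith
    nlinarith
  have hG0 : 0 ≤ logDefect s j 1 := logDefect_nonneg hs0.le hs1.le (by linarith) zero_le_one
  have hG1 : logDefect s j 1 ≤ 1 := logDefect_le_one hs0.le hs1.le hjR
  have hsum := Finset.sum_le_sum (s := Finset.range (Z - j)) fun k hk => by
    have hk' := Finset.mem_range.1 hk
    exact logDefect_tangent (s := s) (p := y (k + j) - y k) (d := y (k + j + 1) - y (k + j))
      (j := j) hs0 hs1 (sub_pos.2 (hy _ _ (by omega) (by omega)))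
      (sub_pos.2 (hy _ _ (by omega) (by omega))) (by linarith)
  refine le_trans ?_ hsum
  have hd : ∑ k ∈ Finset.range (Z - j), (y (k + j + 1) - y (k + j)) = y Z - y j := by
    have := Finset.sum_range_sub (fun k => y (k + j)) (Z - j)
    simp only [zero_add, Nat.sub_add_cancel hj] at this
    rw [← this]
    refine Finset.sum_congr rfl fun k _ => ?_
    rw [show k + j + 1 = k + 1 + j by ring]
  have hexp : ∑ k ∈ Finset.range (Z - j), ((y (k + j + 1) - y (k + j)) * logDefect s j 1 -
      c * (y (k + j) - y k - j * (y (k + j + 1) - y (k + j)))) =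
      (y Z - y j) * logDefect s j 1 -
        c * (∑ k ∈ Finset.range (Z - j), (y (k + j) - y k) - j * (y Z - y j)) := by
    rw [← hd, Finset.sum_mul, Finset.mul_sum, ← Finset.sum_sub_distrib, Finset.mul_sum,
      ← Finset.sum_sub_distrib]
  rw [hexp]
  have hp := sum_spans_le hy hj
  have hb := sub_zero_le_of_gaps hη hj
  have e1 : (y j - y 0) * logDefect s j 1 ≤ j * η :=
    (mul_le_mul_of_nonneg_right hb hG0).trans (by
      have : 0 ≤ j * η := by positivity
      nlinarith)
  have e2 : c * (∑ k ∈ Finset.range (Z - j), (y (k + j) - y k) - j * (y Z - y j)) ≤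
      (j : ℝ) ^ 2 * η := by
    have : ∑ k ∈ Finset.range (Z - j), (y (k + j) - y k) - j * (y Z - y j) ≤ (j : ℝ) ^ 2 * η := by
      nlinarith
    have h0 : 0 ≤ (j : ℝ) ^ 2 * η := by positivity
    calc _ ≤ c * ((j : ℝ) ^ 2 * η) := mul_le_mul_of_nonneg_left this hc0
      _ ≤ 1 * ((j : ℝ) ^ 2 * η) := mul_le_mul_of_nonneg_right hc1 h0
      _ = _ := one_mul _
  have e3 : j * η ≤ (j : ℝ) ^ 2 * η := mul_le_mul_of_nonneg_right (by nlinarith) hη0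
  linarith

/-- The mirror image of `sum_logDefect_left`, for the neighbours on the right. -/
lemma sum_logDefect_right (hs0 : 0 < s) (hs1 : s < 1)
    (hy : ∀ i k, i < k → k ≤ Z → y i < y k) (hη0 : 0 ≤ η)
    (hη : ∀ k < Z, y (k + 1) - y k ≤ η) (hj1 : 1 ≤ j) (hj : j ≤ Z) :
    (y Z - y 0) * logDefect s j 1 - 2 * (j : ℝ) ^ 2 * η ≤
      ∑ k ∈ Finset.range (Z - j), (y (k + 1) - y k) *
        logDefect s (y (k + 1 + j) - y (k + 1)) (y (k + 1) - y k) := by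
  have h := sum_logDefect_left (y := fun k => -y (Z - k)) (Z := Z) (j := j) (η := η) hs0 hs1
    (fun i k hik hk => neg_lt_neg (hy _ _ (by omega) (by omega))) hη0
    (fun k hk => by
      have := hη (Z - (k + 1)) (by omega)
      rw [show Z - (k + 1) + 1 = Z - k by omega] at this
      linarith) hj1 hj
  simp only [Nat.sub_self, Nat.sub_zero] at h
  rw [show -y 0 - -y Z = y Z - y 0 by ring] at h
  refine h.trans_eq ?_
  rw [← Finset.sum_range_reflect]
  refine Finset.sum_congr rfl fun k hk => ?_
  have hk' := Finset.mem_range.1 hk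
  rw [show Z - (Z - j - 1 - k + j + 1) = k by omega, show Z - (Z - j - 1 - k + j) = k + 1 by omega,
    show Z - (Z - j - 1 - k) = k + 1 + j by omega]
  congr 1
  · ring
  · congr 1 <;> ring

end Offsets

/-! ### The node polynomial inside a gap -/

/-- The node polynomial `∏ (t - x i)` of the nodes `x 0, …, x (n - 1)`. -/
noncomputable def nodePoly (n : ℕ) (x : ℕ → ℝ) (t : ℝ) : ℝ := ∏ i ∈ Finset.range n, (t - x i)

/-- The reciprocal `1 / |P'(x k)|` of the derivative of the node polynomial `P` at a node. -/
noncomputable def nodeWeight (n : ℕ) (x : ℕ → ℝ) (k : ℕ) : ℝ :=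
  ∏ i ∈ (Finset.range n).erase k, |x k - x i|⁻¹

lemma nodeWeight_pos {n : ℕ} {x : ℕ → ℝ} (hx : StrictMono x) (k : ℕ) : 0 < nodeWeight n x k :=
  Finset.prod_pos fun _ hi => inv_pos.2 <| abs_pos.2 <| sub_ne_zero.2 <|
    hx.injective.ne (Finset.ne_of_mem_erase hi).symm

/-- The total concavity defect at relative position `s` in the gap `(y k, y (k + 1))` caused by
the at most `J` nearest nodes on either side, among `y 0, …, y Z`. -/
noncomputable def gapDefect (J Z : ℕ) (y : ℕ → ℝ) (s : ℝ) (k : ℕ) : ℝ :=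
  ∑ j ∈ Finset.Icc 1 J,
    ((if j ≤ k then logDefect s (y k - y (k - j)) (y (k + 1) - y k) else 0) +
      (if k + 1 + j ≤ Z then logDefect (1 - s) (y (k + 1 + j) - y (k + 1)) (y (k + 1) - y k)
        else 0))

section Gap
variable {n : ℕ} {x : ℕ → ℝ} {s : ℝ}

/-- The contribution of the node `x i` to the concavity defect of `log |P|`, where `P` is the
node polynomial, at relative position `s` in the gap `(x K, x (K + 1))`. -/
noncomputable def nodeDefect (x : ℕ → ℝ) (s : ℝ) (K i : ℕ) : ℝ :=
  log |x K + s * (x (K + 1) - x K) - x i| - (1 - s) * log |x K - x i| - s * log |x (K + 1) - x i|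

lemma nodeDefect_left (hx : StrictMono x) (hs0 : 0 < s) {K i : ℕ} (hi : i < K) :
    nodeDefect x s K i = logDefect s (x K - x i) (x (K + 1) - x K) := by
  have h1 := hx hi
  have h2 := hx (Nat.lt_succ_self K)
  simp only [Nat.succ_eq_add_one] at h2
  have h3 : 0 < s * (x (K + 1) - x K) := mul_pos hs0 (by linarith)
  unfold nodeDefect logDefect
  rw [abs_of_pos (by linarith), abs_of_pos (by linarith), abs_of_pos (by linarith)]
  congr 2
  · congr 2; ring
  · congr 1; ring

lemma nodeDefect_right (hx : StrictMono x) (hs1 : s < 1) {K i : ℕ} (hi : K + 1 < i) :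
    nodeDefect x s K i = logDefect (1 - s) (x i - x (K + 1)) (x (K + 1) - x K) := by
  have h1 := hx hi
  have h2 := hx (Nat.lt_succ_self K)
  simp only [Nat.succ_eq_add_one] at h2
  have h3 : 0 < (1 - s) * (x (K + 1) - x K) := mul_pos (by linarith) (by linarith)
  unfold nodeDefect logDefect
  rw [abs_of_neg (by linarith), abs_of_neg (by linarith), abs_of_neg (by linarith)]
  have e1 : -(x K + s * (x (K + 1) - x K) - x i) =
    x i - x (K + 1) + (1 - s) * (x (K + 1) - x K) := by ring
  have e2 : -(x K - x i) = x i - x (K + 1) + (x (K + 1) - x K) := by ring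
  rw [e1, e2, neg_sub]
  ring

lemma nodeDefect_nonneg (hx : StrictMono x) (hs0 : 0 < s) (hs1 : s < 1) {K i : ℕ}
    (hi : i ≠ K) (hi' : i ≠ K + 1) : 0 ≤ nodeDefect x s K i := by
  have h2 := hx (Nat.lt_succ_self K)
  simp only [Nat.succ_eq_add_one] at h2
  rcases lt_or_ge i K with h | h
  · rw [nodeDefect_left hx hs0 h]
    exact logDefect_nonneg hs0.le hs1.le (sub_pos.2 (hx h)) (by linarith)
  · have h' : K + 1 < i := by omega
    rw [nodeDefect_right hx hs1 h']
    exact logDefect_nonneg (by linarith) (by linarith) (sub_pos.2 (hx h')) (by linarith)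

/-- Inside a gap, `log |P|` splits into the contribution of the two end nodes, a convex combination
of the logarithms of their weights, and the concavity defects of all other nodes. -/
lemma log_nodePoly_eq (hx : StrictMono x) (hs0 : 0 < s) (hs1 : s < 1) {K : ℕ} (hK : K + 1 < n) :
    log |nodePoly n x (x K + s * (x (K + 1) - x K))| =
      log ((x (K + 1) - x K) * (s * (1 - s))) - (1 - s) * log (nodeWeight n x K)
        - s * log (nodeWeight n x (K + 1))
        + ∑ i ∈ Finset.range n \ {K, K + 1}, nodeDefect x s K i := by
  set N := Finset.range n \ {K, K + 1} with hN
  have hd : 0 < x (K + 1) - x K := sub_pos.2 (hx (Nat.lt_succ_self K))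
  have h1s : 0 < 1 - s := by linarith
  have hKN : K ∉ N := by simp [hN]
  have hKN' : K + 1 ∉ N := by simp [hN]
  have hr : Finset.range n = insert K (insert (K + 1) N) := by
    ext i; simp [hN]; omega
  have hr1 : (Finset.range n).erase K = insert (K + 1) N := by
    ext i; simp [hN]; omega
  have hr2 : (Finset.range n).erase (K + 1) = insert K N := by
    ext i; simp [hN]; omega
  have hne : ∀ i ∈ N, i ≠ K ∧ i ≠ K + 1 := by
    intro i hi; simp [hN] at hi; omega
  set t := x K + s * (x (K + 1) - x K) with ht
  have htl : x K < t := by rw [ht]; nlinarith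
  have htr : t < x (K + 1) := by rw [ht]; nlinarith
  have hti : ∀ i ∈ N, |t - x i| ≠ 0 := by
    intro i hi
    rw [abs_ne_zero, sub_ne_zero]
    rcases lt_or_ge i K with h | h
    · exact ((hx h).trans htl).ne'
    · have := (hne i hi).1; have := (hne i hi).2
      exact (htr.trans (hx (show K + 1 < i by omega))).ne
  have hw1 : log (nodeWeight n x K) = -(log (x (K + 1) - x K) + ∑ i ∈ N, log |x K - x i|) := by
    unfold nodeWeight
    rw [hr1, Finset.prod_inv_distrib, log_inv, Finset.prod_insert hKN', log_mul, log_prod,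
      abs_sub_comm, abs_of_pos hd]
    · intro i hi
      exact abs_ne_zero.2 (sub_ne_zero.2 (hx.injective.ne (hne i hi).1.symm))
    · exact abs_ne_zero.2 (by linarith)
    · exact Finset.prod_ne_zero_iff.2 fun i hi =>
        abs_ne_zero.2 (sub_ne_zero.2 (hx.injective.ne (hne i hi).1.symm))
  have hw2 : log (nodeWeight n x (K + 1)) =
      -(log (x (K + 1) - x K) + ∑ i ∈ N, log |x (K + 1) - x i|) := by
    unfold nodeWeight
    rw [hr2, Finset.prod_inv_distrib, log_inv, Finset.prod_insert hKN, log_mul, log_prod,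
      abs_of_pos hd]
    · intro i hi
      exact abs_ne_zero.2 (sub_ne_zero.2 (hx.injective.ne (hne i hi).2.symm))
    · exact abs_ne_zero.2 (by linarith)
    · exact Finset.prod_ne_zero_iff.2 fun i hi =>
        abs_ne_zero.2 (sub_ne_zero.2 (hx.injective.ne (hne i hi).2.symm))
  have hP : log |nodePoly n x t| = log (x (K + 1) - x K) + log ((x (K + 1) - x K) * (s * (1 - s)))
      + ∑ i ∈ N, log |t - x i| := by
    unfold nodePoly
    rw [Finset.abs_prod, hr, Finset.prod_insert (by simp [hKN]), Finset.prod_insert hKN',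
      ← mul_assoc, log_mul, log_prod hti]
    · congr 1
      rw [← log_mul hd.ne' (by positivity), ← abs_mul]
      congr 1
      rw [abs_of_neg (by nlinarith), ht]
      ring
    · exact mul_ne_zero (abs_ne_zero.2 (by linarith)) (abs_ne_zero.2 (by linarith))
    · exact Finset.prod_ne_zero_iff.2 hti
  have hS : ∑ i ∈ N, nodeDefect x s K i = ∑ i ∈ N, log |t - x i| -
      (1 - s) * ∑ i ∈ N, log |x K - x i| - s * ∑ i ∈ N, log |x (K + 1) - x i| := by
    simp only [nodeDefect, ← ht]
    rw [Finset.sum_sub_distrib, Finset.sum_sub_distrib, Finset.mul_sum, Finset.mul_sum]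
  rw [hP, hS, hw1, hw2]
  ring

lemma gapDefect_le_sum (hx : StrictMono x) (hs0 : 0 < s) (hs1 : s < 1) {J Z u k : ℕ}
    (hZ : u + Z < n) (hk : k < Z) :
    gapDefect J Z (fun i => x (u + i)) s k ≤
      ∑ i ∈ Finset.range n \ {u + k, u + k + 1}, nodeDefect x s (u + k) i := by
  unfold gapDefect
  rw [Finset.sum_add_distrib, ← Finset.sum_filter, ← Finset.sum_filter]
  set A := (Finset.Icc 1 J).filter (fun j => j ≤ k) with hA
  set B := (Finset.Icc 1 J).filter (fun j => k + 1 + j ≤ Z) with hB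
  have e1 : ∑ j ∈ A, logDefect s (x (u + k) - x (u + (k - j))) (x (u + (k + 1)) - x (u + k)) =
      ∑ i ∈ A.image (fun j => u + (k - j)), nodeDefect x s (u + k) i := by
    rw [Finset.sum_image]
    · refine Finset.sum_congr rfl fun j hj => ?_
      simp only [hA, Finset.mem_filter, Finset.mem_Icc] at hj
      rw [nodeDefect_left hx hs0 (by omega)]; rfl
    · intro a ha b hb hab
      simp only [hA, Finset.coe_filter, Set.mem_ofPred_eq, Finset.mem_Icc] at ha hb hab
      omega
  have e2 : ∑ j ∈ B, logDefect (1 - s) (x (u + (k + 1 + j)) - x (u + (k + 1)))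
        (x (u + (k + 1)) - x (u + k)) =
      ∑ i ∈ B.image (fun j => u + (k + 1 + j)), nodeDefect x s (u + k) i := by
    rw [Finset.sum_image]
    · refine Finset.sum_congr rfl fun j hj => ?_
      simp only [hB, Finset.mem_filter, Finset.mem_Icc] at hj
      rw [nodeDefect_right hx hs1 (by omega)]; rfl
    · intro a ha b hb hab
      simp only at hab
      omega
  rw [e1, e2, ← Finset.sum_union]
  · refine Finset.sum_le_sum_of_subset_of_nonneg ?_ ?_
    · intro i hi
      simp only [hA, hB, Finset.mem_union, Finset.mem_image, Finset.mem_filter,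
        Finset.mem_Icc] at hi
      simp only [Finset.mem_sdiff, Finset.mem_range, Finset.mem_insert, Finset.mem_singleton]
      rcases hi with ⟨j, hj, rfl⟩ | ⟨j, hj, rfl⟩ <;> omega
    · intro i hi _
      simp only [Finset.mem_sdiff, Finset.mem_range, Finset.mem_insert, Finset.mem_singleton] at hi
      exact nodeDefect_nonneg hx hs0 hs1 (by omega) (by omega)
  · rw [Finset.disjoint_left]
    intro i hi hi'
    simp only [hA, hB, Finset.mem_image, Finset.mem_filter, Finset.mem_Icc] at hi hi'
    obtain ⟨j, hj, rfl⟩ := hi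
    obtain ⟨j', hj', h⟩ := hi'
    omega

/-- Lower bound for the node polynomial inside one gap, in terms of the weights at its ends;
concavity of `log` replaces the geometric mean of the weights by their arithmetic mean. -/
lemma gap_lower_bound (hx : StrictMono x) (hs0 : 0 < s) (hs1 : s < 1) {J Z u k : ℕ}
    (hZ : u + Z < n) (hk : k < Z) :
    (x (u + k + 1) - x (u + k)) * (s * (1 - s)) * exp (gapDefect J Z (fun i => x (u + i)) s k) ≤
      |nodePoly n x (x (u + k) + s * (x (u + k + 1) - x (u + k)))| *
        ((1 - s) * nodeWeight n x (u + k) + s * nodeWeight n x (u + k + 1)) := by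
  have hd : 0 < x (u + k + 1) - x (u + k) := sub_pos.2 (hx (Nat.lt_succ_self _))
  have h1s : 0 < 1 - s := by linarith
  have hb1 := nodeWeight_pos (n := n) hx (u + k)
  have hb2 := nodeWeight_pos (n := n) hx (u + k + 1)
  have hlog := log_nodePoly_eq (n := n) hx hs0 hs1 (K := u + k) (by omega)
  have hdef := gapDefect_le_sum (J := J) hx hs0 hs1 hZ hk
  have hcc := strictConcaveOn_log_Ioi.concaveOn.2 (show _ ∈ Set.Ioi (0:ℝ) from hb1)
    (show _ ∈ Set.Ioi (0:ℝ) from hb2) h1s.le hs0.le (by ring)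
  simp only [smul_eq_mul] at hcc
  set P := nodePoly n x (x (u + k) + s * (x (u + k + 1) - x (u + k))) with hP
  set β := (1 - s) * nodeWeight n x (u + k) + s * nodeWeight n x (u + k + 1) with hβ
  have hβ0 : 0 < β := by positivity
  have hP0 : 0 < |P| := by
    rw [abs_pos, hP, nodePoly, Finset.prod_ne_zero_iff]
    intro i _
    have htl : x (u + k) < x (u + k) + s * (x (u + k + 1) - x (u + k)) := by nlinarith
    have htr : x (u + k) + s * (x (u + k + 1) - x (u + k)) < x (u + k + 1) := by nlinarith
    rw [sub_ne_zero]
    rcases le_or_gt i (u + k) with h | h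
    · exact ((hx.monotone h).trans_lt htl).ne'
    · exact (htr.trans_le (hx.monotone h)).ne
  rw [← log_le_log_iff (by positivity) (by positivity), log_mul (by positivity) (exp_ne_zero _),
    log_exp, log_mul hP0.ne' hβ0.ne']
  linarith

end Gap

/-! ### The local product inequality for a run of nodes -/

/-- The total concavity defect for equally spaced nodes with `J` neighbours on either side. -/
noncomputable def uniformDefect (J : ℕ) (s : ℝ) : ℝ :=
  ∑ j ∈ Finset.Icc 1 J, (logDefect s j 1 + logDefect (1 - s) j 1)

/-- Jensen's inequality over the gaps: the length-weighted mean defect is, up to a boundary term,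
at least the defect for equally spaced nodes. -/
lemma sum_gapDefect {y : ℕ → ℝ} {J Z : ℕ} {η s : ℝ} (hs0 : 0 < s) (hs1 : s < 1)
    (hy : ∀ i k, i < k → k ≤ Z → y i < y k) (hη0 : 0 ≤ η)
    (hη : ∀ k < Z, y (k + 1) - y k ≤ η) (hJ : J ≤ Z) :
    (y Z - y 0) * uniformDefect J s - 4 * (J : ℝ) ^ 3 * η ≤
      ∑ k ∈ Finset.range Z, (y (k + 1) - y k) * gapDefect J Z y s k := by
  unfold gapDefect uniformDefect
  simp_rw [Finset.mul_sum]
  rw [Finset.sum_comm]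
  have hterm : ∀ j ∈ Finset.Icc 1 J,
      (y Z - y 0) * (logDefect s j 1 + logDefect (1 - s) j 1) - 4 * (J : ℝ) ^ 2 * η ≤
      ∑ k ∈ Finset.range Z, (y (k + 1) - y k) *
        ((if j ≤ k then logDefect s (y k - y (k - j)) (y (k + 1) - y k) else 0) +
        (if k + 1 + j ≤ Z then logDefect (1 - s) (y (k + 1 + j) - y (k + 1)) (y (k + 1) - y k)
          else 0)) := by
    intro j hj
    rw [Finset.mem_Icc] at hj
    have hl := sum_logDefect_left hs0 hs1 hy hη0 hη hj.1 (hj.2.trans hJ)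
    have hr := sum_logDefect_right (s := 1 - s) (by linarith) (by linarith) hy hη0 hη hj.1
      (hj.2.trans hJ)
    simp_rw [mul_add, Finset.sum_add_distrib, mul_ite, mul_zero]
    rw [← Finset.sum_filter, ← Finset.sum_filter]
    have f1 : (Finset.range Z).filter (fun k => j ≤ k) = Finset.Ico j Z := by
      ext k; simp; omega
    have f2 : (Finset.range Z).filter (fun k => k + 1 + j ≤ Z) = Finset.range (Z - j) := by
      ext k; simp; omega
    rw [f1, f2, Finset.sum_Ico_eq_sum_range]
    have e1 : ∑ k ∈ Finset.range (Z - j), (y (j + k + 1) - y (j + k)) *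
          logDefect s (y (j + k) - y (j + k - j)) (y (j + k + 1) - y (j + k)) =
        ∑ k ∈ Finset.range (Z - j), (y (k + j + 1) - y (k + j)) *
          logDefect s (y (k + j) - y k) (y (k + j + 1) - y (k + j)) := by
      refine Finset.sum_congr rfl fun k _ => ?_
      rw [Nat.add_sub_cancel_left, add_comm j k]
    rw [e1]
    have hjJ : (j : ℝ) ^ 2 * η ≤ (J : ℝ) ^ 2 * η := by
      have : (j : ℝ) ≤ J := by exact_mod_cast hj.2
      gcongr
    linarith
  refine le_trans (le_of_eq ?_) (Finset.sum_le_sum hterm)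
  rw [Finset.sum_sub_distrib, Finset.sum_const, Nat.card_Icc, Nat.add_sub_cancel, nsmul_eq_mul]
  ring

/-- The local product inequality at a fixed relative position `s` in all gaps of a run of
consecutive nodes: Cauchy–Schwarz over the gaps, followed by Jensen's inequality. -/
lemma cell_pointwise {n : ℕ} {x : ℕ → ℝ} (hx : StrictMono x) {J Z u : ℕ} {η s : ℝ}
    (hs0 : 0 < s) (hs1 : s < 1) (hZ : u + Z < n) (hη0 : 0 ≤ η)
    (hη : ∀ k < Z, x (u + k + 1) - x (u + k) ≤ η) (hJ : J ≤ Z)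
    (hD : 2 * (J : ℝ) ^ 3 * η ≤ x (u + Z) - x u) :
    s * (1 - s) * exp (uniformDefect J s) * (x (u + Z) - x u - 2 * (J : ℝ) ^ 3 * η) ^ 2 ≤
      (∑ k ∈ Finset.range Z, (x (u + k + 1) - x (u + k)) *
        |nodePoly n x (x (u + k) + s * (x (u + k + 1) - x (u + k)))|) *
      ∑ k ∈ Finset.range (Z + 1), nodeWeight n x (u + k) := by
  have h1s : 0 < 1 - s := by linarith
  set d : ℕ → ℝ := fun k => x (u + k + 1) - x (u + k) with hd
  have hd0 : ∀ k, 0 < d k := fun k => sub_pos.2 (hx (Nat.lt_succ_self _))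
  set W : ℕ → ℝ := fun k => |nodePoly n x (x (u + k) + s * (x (u + k + 1) - x (u + k)))| with hW
  set b : ℕ → ℝ := fun k => nodeWeight n x (u + k) with hb
  have hb0 : ∀ k, 0 < b k := fun k => nodeWeight_pos hx _
  set β : ℕ → ℝ := fun k => (1 - s) * b k + s * b (k + 1) with hβ
  have hβ0 : ∀ k, 0 < β k := fun k => by have := hb0 k; have := hb0 (k + 1); positivity
  set E : ℕ → ℝ := gapDefect J Z (fun i => x (u + i)) s with hE
  set U := uniformDefect J s with hU
  -- The weights `β k` are convex combinations of neighbouring weights `b k`.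
  have hβb : ∑ k ∈ Finset.range Z, β k ≤ ∑ k ∈ Finset.range (Z + 1), b k := by
    have h1 : ∑ k ∈ Finset.range Z, β k =
        (1 - s) * ∑ k ∈ Finset.range Z, b k + s * ∑ k ∈ Finset.range Z, b (k + 1) := by
      rw [Finset.mul_sum, Finset.mul_sum, ← Finset.sum_add_distrib]
    have h2 := Finset.sum_range_succ b Z
    have h3 := Finset.sum_range_succ' b Z
    have := hb0 Z
    have := hb0 0
    rw [h1]
    nlinarith
  have hgap : ∀ k ∈ Finset.range Z,
      (d k * √(s * (1 - s)) * exp (E k / 2)) ^ 2 ≤ (d k * W k) * β k := by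
    intro k hk
    have h := gap_lower_bound (J := J) hx hs0 hs1 hZ (Finset.mem_range.1 hk)
    have h2 := mul_le_mul_of_nonneg_left h (hd0 k).le
    rw [mul_pow, mul_pow, Real.sq_sqrt (by positivity), ← exp_nat_mul]
    have e : ((2 : ℕ) : ℝ) * (E k / 2) = E k := by push_cast; ring
    rw [e]
    calc _ = d k * (d k * (s * (1 - s)) * exp (E k)) := by ring
      _ ≤ _ := h2
      _ = _ := by simp only [hW, hβ, hb]; ring_nf
  have hCS := Finset.sum_sq_le_sum_mul_sum_of_sq_le_mul (Finset.range Z)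
    (fun k _ => mul_nonneg (hd0 k).le (abs_nonneg _)) (fun k _ => (hβ0 k).le) hgap
  have hJen := sum_gapDefect (y := fun i => x (u + i)) hs0 hs1
    (fun i k hik _ => hx (by omega)) hη0 hη hJ
  simp only [add_zero] at hJen
  have hDsum : ∑ k ∈ Finset.range Z, d k = x (u + Z) - x u := by
    simpa [hd, add_assoc] using Finset.sum_range_sub (fun k => x (u + k)) Z
  -- `exp v ≥ exp w * (1 + (v - w))` linearises the exponential around the uniform defect.
  have hlin : √(s * (1 - s)) * exp (U / 2) * (x (u + Z) - x u - 2 * (J : ℝ) ^ 3 * η) ≤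
      ∑ k ∈ Finset.range Z, d k * √(s * (1 - s)) * exp (E k / 2) := by
    have h1 : ∀ k ∈ Finset.range Z, √(s * (1 - s)) * exp (U / 2) * (d k + (d k * E k - d k * U) / 2)
        ≤ d k * √(s * (1 - s)) * exp (E k / 2) := by
      intro k _
      have h2 : exp (U / 2) * (1 + (E k - U) / 2) ≤ exp (E k / 2) := by
        have := Real.add_one_le_exp ((E k - U) / 2)
        calc _ ≤ exp (U / 2) * exp ((E k - U) / 2) := by gcongr; linarith
          _ = _ := by rw [← exp_add]; congr 1; ring
      have h3 := mul_le_mul_of_nonneg_left h2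
        (mul_nonneg (hd0 k).le (Real.sqrt_nonneg (s * (1 - s))))
      linarith
    refine le_trans ?_ (Finset.sum_le_sum h1)
    have hexp : ∑ k ∈ Finset.range Z, (d k + (d k * E k - d k * U) / 2) =
        (x (u + Z) - x u) + (∑ k ∈ Finset.range Z, d k * E k - (x (u + Z) - x u) * U) / 2 := by
      rw [← hDsum, Finset.sum_mul, ← Finset.sum_sub_distrib, Finset.sum_div,
        ← Finset.sum_add_distrib]
    rw [← Finset.mul_sum, hexp]
    have h4 : (x (u + Z) - x u) * U - 4 * (J : ℝ) ^ 3 * η ≤ ∑ k ∈ Finset.range Z, d k * E k := hJen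
    gcongr
    linarith
  calc _ = (√(s * (1 - s)) * exp (U / 2) * (x (u + Z) - x u - 2 * (J : ℝ) ^ 3 * η)) ^ 2 := by
        rw [mul_pow, mul_pow, Real.sq_sqrt (by positivity), ← exp_nat_mul]
        congr 3; push_cast; ring
    _ ≤ _ := by
        have h0 : 0 ≤ x (u + Z) - x u - 2 * (J : ℝ) ^ 3 * η := by linarith
        have h1 : 0 ≤ √(s * (1 - s)) * exp (U / 2) * (x (u + Z) - x u - 2 * (J : ℝ) ^ 3 * η) := by
          positivity
        gcongr
    _ ≤ _ := hCS
    _ ≤ _ := by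
        gcongr
        exact Finset.sum_nonneg fun k _ => mul_nonneg (hd0 k).le (abs_nonneg _)

/-- For equally spaced nodes the gap profile telescopes to a partial Euler product for the sine. -/
lemma uniform_product {s : ℝ} (hs0 : 0 < s) (hs1 : s < 1) (J : ℕ) :
    s * (1 - s) * exp (uniformDefect J s) =
      s * (∏ j ∈ Finset.range J, (1 - s ^ 2 / ((j : ℝ) + 1) ^ 2)) * (1 - s / (J + 1)) := by
  induction J with
  | zero => simp [uniformDefect]
  | succ J ih =>
    have h1s : 0 < 1 - s := by linarith
    have hJ : (0 : ℝ) ≤ J := Nat.cast_nonneg J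
    have hstep : exp (logDefect s (J + 1 : ℕ) 1 + logDefect (1 - s) (J + 1 : ℕ) 1) =
        (J + 1 + s) * (J + 2 - s) / ((J + 1) * (J + 2)) := by
      have : logDefect s (J + 1 : ℕ) 1 + logDefect (1 - s) (J + 1 : ℕ) 1 =
          log ((J + 1 + s) * (J + 2 - s) / ((J + 1) * (J + 2))) := by
        rw [log_div (mul_pos (by linarith) (by linarith)).ne' (by positivity),
          log_mul (by linarith) (by linarith), log_mul (by positivity) (by positivity)]
        unfold logDefect
        push_cast
        rw [show (J : ℝ) + 1 + s * 1 = J + 1 + s by ring,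
          show (J : ℝ) + 1 + (1 - s) * 1 = J + 2 - s by ring,
          show (J : ℝ) + 1 + 1 = J + 2 by ring]
        ring
      rw [this, exp_log (div_pos (mul_pos (by linarith) (by linarith)) (by positivity))]
    have : uniformDefect (J + 1) s = uniformDefect J s +
        (logDefect s (J + 1 : ℕ) 1 + logDefect (1 - s) (J + 1 : ℕ) 1) := by
      unfold uniformDefect
      rw [Finset.sum_Icc_succ_top (by omega)]
    rw [this, exp_add, ← mul_assoc, ih, hstep, Finset.prod_range_succ]
    push_cast
    have h2 : (J : ℝ) + 1 ≠ 0 := by positivity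
    have h3 : (J : ℝ) + 2 ≠ 0 := by positivity
    have h4 : (J : ℝ) + 1 + 1 ≠ 0 := by positivity
    field_simp
    ring

/-- By Euler's product, the gap profile of equally spaced nodes is nearly at least
`sin (π s) / π`. -/
lemma uniform_ge_sin {s : ℝ} (hs0 : 0 < s) (hs1 : s < 1) (J : ℕ) :
    (1 - 1 / ((J : ℝ) + 1)) * (sin (π * s) / π) ≤ s * (1 - s) * exp (uniformDefect J s) := by
  rw [uniform_product hs0 hs1]
  have hfac : ∀ j : ℕ, 0 ≤ 1 - s ^ 2 / ((j : ℝ) + 1) ^ 2 ∧ 1 - s ^ 2 / ((j : ℝ) + 1) ^ 2 ≤ 1 := by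
    intro j
    have hj : (0 : ℝ) ≤ j := Nat.cast_nonneg j
    constructor
    · rw [sub_nonneg, div_le_one (by positivity)]; gcongr; linarith
    · have : 0 ≤ s ^ 2 / ((j : ℝ) + 1) ^ 2 := by positivity
      linarith
  have hprod0 : ∀ m, 0 ≤ ∏ j ∈ Finset.range m, (1 - s ^ 2 / ((j : ℝ) + 1) ^ 2) :=
    fun m => Finset.prod_nonneg fun j _ => (hfac j).1
  have hanti : Antitone fun m : ℕ =>
      π * s * ∏ j ∈ Finset.range m, (1 - s ^ 2 / ((j : ℝ) + 1) ^ 2) := by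
    refine antitone_nat_of_succ_le fun m => ?_
    rw [Finset.prod_range_succ]
    have := mul_le_of_le_one_right (hprod0 m) (hfac m).2
    have hps : 0 ≤ π * s := by positivity
    exact mul_le_mul_of_nonneg_left this hps
  have hle := hanti.le_of_tendsto (Real.tendsto_euler_sin_prod s) J
  have hsin : sin (π * s) / π ≤ s * ∏ j ∈ Finset.range J, (1 - s ^ 2 / ((j : ℝ) + 1) ^ 2) := by
    rw [div_le_iff₀ pi_pos]; linarith
  have hJ : (0 : ℝ) < (J : ℝ) + 1 := by positivity
  have h1 : 1 - 1 / ((J : ℝ) + 1) ≤ 1 - s / (J + 1) := by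
    have : s / ((J : ℝ) + 1) ≤ 1 / (J + 1) := by gcongr
    linarith
  have h0 : 0 ≤ 1 - 1 / ((J : ℝ) + 1) := by
    rw [sub_nonneg, div_le_one hJ]
    have : (0 : ℝ) ≤ J := Nat.cast_nonneg J
    linarith
  calc _ ≤ (1 - 1 / ((J : ℝ) + 1)) *
        (s * ∏ j ∈ Finset.range J, (1 - s ^ 2 / ((j : ℝ) + 1) ^ 2)) := by gcongr
    _ ≤ (1 - s / (J + 1)) * (s * ∏ j ∈ Finset.range J, (1 - s ^ 2 / ((j : ℝ) + 1) ^ 2)) := by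
        have := mul_nonneg hs0.le (hprod0 J)
        gcongr
    _ = _ := by ring

lemma continuous_nodePoly (n : ℕ) (x : ℕ → ℝ) : Continuous (nodePoly n x) := by
  unfold nodePoly; fun_prop

lemma integral_sin_pi : ∫ s in (0:ℝ)..1, sin (π * s) / π = 2 / π ^ 2 := by
  rw [intervalIntegral.integral_div, intervalIntegral.integral_comp_mul_left _ pi_ne_zero]
  simp
  field_simp
  norm_num

/-- The local product inequality for a run of consecutive nodes. -/
lemma run_lower_bound {n : ℕ} {x : ℕ → ℝ} (hx : StrictMono x) {J Z u : ℕ} {η : ℝ}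
    (hZ : u + Z < n) (hη0 : 0 ≤ η)
    (hη : ∀ k < Z, x (u + k + 1) - x (u + k) ≤ η) (hJ : J ≤ Z)
    (hD : 2 * (J : ℝ) ^ 3 * η ≤ x (u + Z) - x u) :
    (1 - 1 / ((J : ℝ) + 1)) * (2 / π ^ 2) * (x (u + Z) - x u - 2 * (J : ℝ) ^ 3 * η) ^ 2 ≤
      (∫ t in (x u)..(x (u + Z)), |nodePoly n x t|) *
      ∑ k ∈ Finset.range (Z + 1), nodeWeight n x (u + k) := by
  have hcont := (continuous_nodePoly n x).abs
  set B := ∑ k ∈ Finset.range (Z + 1), nodeWeight n x (u + k) with hB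
  set D := x (u + Z) - x u - 2 * (J : ℝ) ^ 3 * η with hDdef
  have hint : ∫ t in (x u)..(x (u + Z)), |nodePoly n x t| =
      ∫ s in (0:ℝ)..1, ∑ k ∈ Finset.range Z, (x (u + k + 1) - x (u + k)) *
        |nodePoly n x (x (u + k) + s * (x (u + k + 1) - x (u + k)))| := by
    rw [intervalIntegral.integral_finsetSum]
    · have := intervalIntegral.sum_integral_adjacent_intervals (μ := MeasureTheory.volume)
        (f := fun t => |nodePoly n x t|) (a := fun k => x (u + k)) (n := Z)
        (fun k _ => hcont.intervalIntegrable _ _)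
      simp only [add_zero] at this
      rw [← this]
      refine Finset.sum_congr rfl fun k _ => ?_
      rw [intervalIntegral.integral_const_mul]
      have h := intervalIntegral.mul_integral_comp_add_mul (a := 0) (b := 1)
        (f := fun t => |nodePoly n x t|) (x (u + k + 1) - x (u + k)) (x (u + k))
      simp only [mul_zero, add_zero, mul_one, add_sub_cancel] at h
      rw [show u + (k + 1) = u + k + 1 by ring, ← h]
      simp_rw [mul_comm (x (u + k + 1) - x (u + k))]
    · intro k _
      apply Continuous.intervalIntegrable
      exact continuous_const.mul (hcont.comp (by fun_prop))
  rw [hint, ← intervalIntegral.integral_mul_const, mul_right_comm, ← integral_sin_pi,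
    ← intervalIntegral.integral_const_mul]
  refine intervalIntegral.integral_mono_on_of_le_Ioo zero_le_one ?_ ?_ ?_
  · apply Continuous.intervalIntegrable; fun_prop
  · apply Continuous.intervalIntegrable
    refine Continuous.mul (continuous_finsetSum _ fun k _ => ?_) continuous_const
    exact continuous_const.mul (hcont.comp (by fun_prop))
  · intro s hs
    refine le_trans ?_ (cell_pointwise hx hs.1 hs.2 hZ hη0 hη hJ hD)
    have := mul_le_mul_of_nonneg_right (uniform_ge_sin hs.1 hs.2 J) (sq_nonneg D)
    linarith

/-! ### The local product inequality for a cell -/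

lemma one_sub_le_aux {ε : ℝ} (hε1 : ε ≤ 1) :
    1 - ε ≤ (1 - ε / 2) * (1 - ε / 4) ^ 2 := by
  have h1 : 1 - ε / 2 ≤ (1 - ε / 4) ^ 2 := by nlinarith [sq_nonneg ε]
  have h2 : 0 ≤ 1 - ε / 2 := by linarith
  have h3 := mul_le_mul_of_nonneg_left h1 h2
  nlinarith [sq_nonneg ε]

/-- The local product inequality on a cell `[α, β]` meeting the nodes in every subinterval of length
`(β - α) / M`: the integral of `|P|` times the sum of the weights in the cell is nearly at least
`(2 / π²) (β - α)²`. -/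
lemma cell_lower_bound {ε : ℝ} (hε : 0 < ε) (hε1 : ε < 1) :
    ∃ M : ℕ, 0 < M ∧ ∀ (n : ℕ) (x : ℕ → ℝ) (α β : ℝ), StrictMono x → α < β →
      (∀ c, α ≤ c → c + (β - α) / M ≤ β → ∃ i < n, c < x i ∧ x i < c + (β - α) / M) →
      (1 - ε) * (2 / π ^ 2) * (β - α) ^ 2 ≤ (∫ t in α..β, |nodePoly n x t|) *
        ∑ k ∈ (Finset.range n).filter (fun k => α ≤ x k ∧ x k < β), nodeWeight n x k := by
  obtain ⟨J, hJ⟩ := exists_nat_gt (2 / ε)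
  obtain ⟨M', hM'⟩ := exists_nat_gt (4 * (2 + 2 * (J : ℝ) ^ 3) / ε)
  -- `J` neighbours per side cost a factor `1 - 1 / (J + 1)`, and `M` makes the boundary terms,
  -- which are of size `J ^ 3 / M` relative to the cell, smaller than `ε / 4`.
  refine ⟨M' + J + 3, by omega, ?_⟩
  intro n x α β hx hαβ hgood
  set M := M' + J + 3 with hM
  set η := (β - α) / (M : ℝ) with hη
  have hH : 0 < β - α := by linarith
  have hM0 : (0 : ℝ) < M := by rw [hM]; push_cast; positivity
  have hη0 : 0 < η := by positivity
  have hMη : M * η = β - α := by rw [hη]; field_simp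
  have hM3 : (3 : ℝ) ≤ M := by
    rw [hM]; push_cast
    have : (0 : ℝ) ≤ M' := Nat.cast_nonneg _
    have : (0 : ℝ) ≤ J := Nat.cast_nonneg _
    linarith
  have h3η : 3 * η ≤ β - α := by rw [← hMη]; gcongr
  set C := (Finset.range n).filter (fun k => α ≤ x k ∧ x k < β) with hC
  obtain ⟨i₀, hi₀n, hi₀⟩ := hgood α le_rfl (by linarith)
  obtain ⟨i₁, hi₁n, hi₁⟩ := hgood (β - η) (by linarith) (by linarith)
  have hi₀C : i₀ ∈ C := by
    simp only [hC, Finset.mem_filter, Finset.mem_range]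
    exact ⟨hi₀n, hi₀.1.le, by linarith⟩
  have hi₁C : i₁ ∈ C := by
    simp only [hC, Finset.mem_filter, Finset.mem_range]
    exact ⟨hi₁n, by linarith, by linarith⟩
  have hne : C.Nonempty := ⟨i₀, hi₀C⟩
  -- Apply the inequality for runs to all nodes of the cell, `x u` being the first, `x v` the last.
  set u := C.min' hne with hu
  set v := C.max' hne with hv
  have huC : u ∈ C := C.min'_mem hne
  have hvC : v ∈ C := C.max'_mem hne
  have huv : u ≤ v := C.min'_le _ hvC
  obtain ⟨Z, hZ⟩ := Nat.exists_eq_add_of_le huv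
  have huC' := huC
  have hvC' := hvC
  simp only [hC, Finset.mem_filter, Finset.mem_range] at huC' hvC'
  have hxu : x u ≤ α + η := (hx.monotone (C.min'_le _ hi₀C)).trans hi₀.2.le
  have hxv : β - η ≤ x v := hi₁.1.le.trans (hx.monotone (C.le_max' _ hi₁C))
  rw [hZ] at hxv hvC'
  have hgap : ∀ k < Z, x (u + k + 1) - x (u + k) ≤ η := by
    intro k hk
    by_contra! hcon
    have h1 : α ≤ x (u + k) := huC'.2.1.trans (hx.monotone (by omega))
    have h2 : x (u + k + 1) < β := (hx.monotone (by omega)).trans_lt hvC'.2.2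
    obtain ⟨i, _, hi⟩ := hgood (x (u + k)) h1 (by linarith)
    have h3 := hx.lt_iff_lt.1 hi.1
    have h4 : i < u + k + 1 := hx.lt_iff_lt.1 (by linarith)
    omega
  have hDle := sub_zero_le_of_gaps (y := fun k => x (u + k)) (Z := Z) (j := Z) hgap le_rfl
  simp only [add_zero] at hDle
  have hD2 : β - α - 2 * η ≤ x (u + Z) - x u := by linarith
  have hJZ : J ≤ Z := by
    have h1 : ((M : ℝ) - 2) * η ≤ Z * η := by linarith
    have h2 : (M : ℝ) - 2 ≤ Z := le_of_mul_le_mul_right h1 hη0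
    have h3 : (M : ℝ) = M' + J + 3 := by rw [hM]; push_cast; ring
    have h4 : (0 : ℝ) ≤ M' := Nat.cast_nonneg _
    have h5 : (J : ℝ) ≤ Z := by linarith
    exact_mod_cast h5
  have hsmall : (2 + 2 * (J : ℝ) ^ 3) * η ≤ ε / 4 * (β - α) := by
    rw [div_lt_iff₀ hε] at hM'
    have h3 : (M : ℝ) = M' + J + 3 := by rw [hM]; push_cast; ring
    have h4 : (0 : ℝ) ≤ J := Nat.cast_nonneg _
    have h5 : 2 + 2 * (J : ℝ) ^ 3 ≤ ε / 4 * M := by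
      have h6 : 0 ≤ ε * J := by positivity
      rw [h3]; linarith
    calc _ ≤ ε / 4 * M * η := by gcongr
      _ = _ := by rw [mul_assoc, hMη]
  have hJ3 : 0 ≤ (J : ℝ) ^ 3 * η := by positivity
  have hεH : ε * (β - α) ≤ β - α := mul_le_of_le_one_left hH.le hε1.le
  have hmain := run_lower_bound hx (n := n) (J := J) (Z := Z) (u := u) (η := η) hvC'.1 hη0.le hgap
    hJZ (by linarith)
  have hint : ∫ t in (x u)..(x (u + Z)), |nodePoly n x t| ≤ ∫ t in α..β, |nodePoly n x t| :=
    intervalIntegral.integral_mono_interval huC'.2.1 (hx.monotone (by omega)) hvC'.2.2.le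
      (Filter.Eventually.of_forall fun t => abs_nonneg _)
      ((continuous_nodePoly n x).abs.intervalIntegrable _ _)
  have hint0 : 0 ≤ ∫ t in α..β, |nodePoly n x t| :=
    intervalIntegral.integral_nonneg hαβ.le fun t _ => abs_nonneg _
  have hsum : ∑ k ∈ Finset.range (Z + 1), nodeWeight n x (u + k) ≤ ∑ k ∈ C, nodeWeight n x k := by
    have e : ∑ k ∈ Finset.range (Z + 1), nodeWeight n x (u + k) =
        ∑ k ∈ (Finset.range (Z + 1)).image (fun k => u + k), nodeWeight n x k := by
      rw [Finset.sum_image]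
      intro a _ b _ hab
      simpa using hab
    rw [e]
    refine Finset.sum_le_sum_of_subset_of_nonneg ?_ fun k _ _ => (nodeWeight_pos hx k).le
    intro j hj
    obtain ⟨k, hk, rfl⟩ := Finset.mem_image.1 hj
    have hk' := Finset.mem_range.1 hk
    simp only [hC, Finset.mem_filter, Finset.mem_range]
    exact ⟨by omega, huC'.2.1.trans (hx.monotone (by omega)),
      (hx.monotone (by omega)).trans_lt hvC'.2.2⟩
  have hsum0 : 0 ≤ ∑ k ∈ Finset.range (Z + 1), nodeWeight n x (u + k) :=
    Finset.sum_nonneg fun k _ => (nodeWeight_pos hx _).le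
  refine le_trans ?_ (hmain.trans (mul_le_mul hint hsum hsum0 hint0))
  have hJ1 : 1 / ((J : ℝ) + 1) ≤ ε / 2 := by
    rw [div_lt_iff₀ hε] at hJ
    rw [div_le_iff₀ (by positivity)]
    linarith
  have hDD : (1 - ε / 4) * (β - α) ≤ x (u + Z) - x u - 2 * (J : ℝ) ^ 3 * η := by linarith
  have h14 : 0 ≤ 1 - ε / 4 := by linarith
  have h12 : 0 ≤ 1 - ε / 2 := by linarith
  calc (1 - ε) * (2 / π ^ 2) * (β - α) ^ 2
      ≤ (1 - ε / 2) * (1 - ε / 4) ^ 2 * (2 / π ^ 2) * (β - α) ^ 2 := by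
        have := one_sub_le_aux hε1.le
        gcongr
    _ = (1 - ε / 2) * (2 / π ^ 2) * ((1 - ε / 4) * (β - α)) ^ 2 := by ring
    _ ≤ _ := by
        have : 0 ≤ (1 - ε / 4) * (β - α) := by positivity
        have : 1 - ε / 2 ≤ 1 - 1 / ((J : ℝ) + 1) := by linarith
        have : 0 ≤ 1 - 1 / ((J : ℝ) + 1) := by linarith
        gcongr

/-! ### The Lebesgue function -/

/-- The Lebesgue function of the nodes `x 0, …, x (n - 1)`. -/
noncomputable def lebesgueFn (n : ℕ) (x : ℕ → ℝ) (t : ℝ) : ℝ :=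
  ∑ k ∈ Finset.range n, |∏ i ∈ (Finset.range n).erase k, (t - x i) / (x k - x i)|

lemma lebesgueFn_nonneg (n : ℕ) (x : ℕ → ℝ) (t : ℝ) : 0 ≤ lebesgueFn n x t :=
  Finset.sum_nonneg fun _ _ => abs_nonneg _

lemma continuous_lebesgueFn (n : ℕ) (x : ℕ → ℝ) : Continuous (lebesgueFn n x) := by
  unfold lebesgueFn; fun_prop

open Polynomial in
/-- Interpolating a Chebyshev polynomial peaked at `t` shows that the Lebesgue function is
exponentially large in `m r` at distance `r` from the nodes. -/
lemma cosh_le_lebesgueFn {n m : ℕ} {x : ℕ → ℝ} (hx : StrictMono x)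
    (hxI : ∀ i < n, x i ∈ Set.Icc (-1 : ℝ) 1) {t r : ℝ} (ht : t ∈ Set.Icc (-1 : ℝ) 1)
    (hr : 0 ≤ r) (hd : ∀ i < n, r ≤ |t - x i|) (hm : 2 * m < n) :
    cosh (m * (r / 2)) ≤ lebesgueFn n x t := by
  have hr2 : r ≤ 2 := by
    refine (hd 0 (by omega)).trans ?_
    have := hxI 0 (by omega)
    rw [abs_le]; constructor <;> linarith [this.1, this.2, ht.1, ht.2]
  have hcosh : cosh (r / 2) ≤ 1 + r ^ 2 / 2 := by
    refine (cosh_le_exp_half_sq _).trans ?_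
    have hz : |(r / 2) ^ 2 / 2| ≤ 1 := by
      rw [abs_of_nonneg (by positivity)]; nlinarith
    have h1 := (abs_le.1 (Real.abs_exp_sub_one_sub_id_le hz)).2
    have h2 : r ^ 2 ≤ 4 := by nlinarith
    have h3 : ((r / 2) ^ 2 / 2) ^ 2 ≤ (r / 2) ^ 2 / 2 := by nlinarith [sq_nonneg r]
    have h4 := sq_nonneg r
    linarith
  -- `peak` equals `cosh (r / 2)` at `t` and has values in `[-1, 1]` at all nodes.
  set peak : ℝ[X] := C (cosh (r / 2)) - C (1 / 2) * (X - C t) ^ 2 with hpeak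
  set q : ℝ[X] := (Chebyshev.T ℝ m).comp peak with hq
  have hpeakdeg : peak.natDegree ≤ 2 := by rw [hpeak]; compute_degree
  have hqdeg : q.degree < ((Finset.range n).card : WithBot ℕ) := by
    rw [Finset.card_range]
    have h1 : q.natDegree ≤ m * 2 := by
      refine natDegree_comp_le.trans ?_
      rw [Chebyshev.natDegree_T]
      exact Nat.mul_le_mul (by simp) hpeakdeg
    exact lt_of_le_of_lt degree_le_natDegree (by exact_mod_cast (by omega : q.natDegree < n))
  have hqt : q.eval t = cosh (m * (r / 2)) := by
    rw [hq, eval_comp, hpeak]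
    simp
  have hqx : ∀ k < n, |q.eval (x k)| ≤ 1 := by
    intro k hk
    rw [hq, eval_comp]
    apply Chebyshev.abs_eval_T_real_le_one
    have h1 : r ^ 2 ≤ (x k - t) ^ 2 := by
      rw [← sq_abs (x k - t), abs_sub_comm]
      exact pow_le_pow_left₀ hr (hd k hk) 2
    have h2 := hxI k hk
    have h3 : (x k - t) ^ 2 ≤ 4 := by nlinarith [h2.1, h2.2, ht.1, ht.2]
    have h4 := one_le_cosh (r / 2)
    rw [hpeak, abs_le]
    simp only [eval_sub, eval_mul, eval_pow, eval_C, eval_X]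
    constructor <;> linarith
  have hinterp := Lagrange.eq_interpolate (s := Finset.range n) (v := x) (f := q)
    (hx.injective.injOn) hqdeg
  rw [Lagrange.interpolate_apply] at hinterp
  have heval := congrArg (eval t) hinterp
  rw [eval_finsetSum, hqt] at heval
  rw [heval]
  refine Finset.sum_le_sum fun k hk => ?_
  rw [eval_mul, eval_C]
  have hb : eval t (Lagrange.basis (Finset.range n) x k) =
      ∏ i ∈ (Finset.range n).erase k, (t - x i) / (x k - x i) := by
    rw [Lagrange.basis, eval_prod]
    refine Finset.prod_congr rfl fun i _ => ?_
    simp [Lagrange.basisDivisor, div_eq_inv_mul]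
  rw [hb]
  refine (le_abs_self _).trans ?_
  rw [abs_mul]
  exact mul_le_of_le_one_left (abs_nonneg _) (hqx k (Finset.mem_range.1 hk))

/-- A Lagrange basis function is the node polynomial times its weight, divided by the distance to
its node. -/
lemma abs_basis_mul {n : ℕ} (x : ℕ → ℝ) {k : ℕ} (hk : k < n) (t : ℝ) :
    |∏ i ∈ (Finset.range n).erase k, (t - x i) / (x k - x i)| * |t - x k| =
      |nodePoly n x t| * nodeWeight n x k := by
  unfold nodePoly nodeWeight
  rw [← Finset.mul_prod_erase _ _ (Finset.mem_range.2 hk), abs_mul, Finset.abs_prod,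
    Finset.abs_prod, mul_comm, mul_assoc, ← Finset.prod_mul_distrib]
  simp_rw [abs_div, div_eq_mul_inv]

/-! ### Summation over cells -/

/-- The double sum producing the factor `2 log S`. -/
lemma sum_inv_dist (S : ℕ) (hS : 0 < S) :
    2 * S * log S - 3 * S ≤ ∑ s ∈ Finset.range S, ∑ s' ∈ Finset.range S,
      1 / (|(s : ℝ) - s'| + 1) := by
  set h : ℕ → ℝ := fun m => ∑ i ∈ Finset.range m, 1 / ((i : ℝ) + 1) with hh
  -- The double sum has a closed form in terms of the harmonic numbers `h m`.
  have key : ∀ m : ℕ, ∑ s ∈ Finset.range m, ∑ s' ∈ Finset.range m, 1 / (|(s : ℝ) - s'| + 1) =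
      2 * (m + 1) * h m - 3 * m := by
    intro m
    induction m with
    | zero => simp [hh]
    | succ m ih =>
      have hrow : ∑ s' ∈ Finset.range m, 1 / (|(m : ℝ) - s'| + 1) = h (m + 1) - 1 := by
        have : h (m + 1) = ∑ i ∈ Finset.range m, 1 / ((i : ℝ) + 1 + 1) + 1 := by
          simp only [hh]; rw [Finset.sum_range_succ']; simp
        rw [this, add_sub_cancel_right, ← Finset.sum_range_reflect]
        refine Finset.sum_congr rfl fun s hs => ?_
        have hs' := Finset.mem_range.1 hs
        have : (m : ℝ) - ((m - 1 - s : ℕ) : ℝ) = s + 1 := by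
          rw [Nat.cast_sub (by omega), Nat.cast_sub (by omega)]; push_cast; ring
        rw [this, abs_of_nonneg (by positivity)]
      have hcol : ∑ s ∈ Finset.range m, 1 / (|(s : ℝ) - m| + 1) = h (m + 1) - 1 := by
        rw [← hrow]
        exact Finset.sum_congr rfl fun s _ => by rw [abs_sub_comm]
      simp_rw [Finset.sum_range_succ _ m]
      rw [Finset.sum_add_distrib, ih, hrow, hcol]
      have h1 : h (m + 1) = h m + 1 / ((m : ℝ) + 1) := by
        simp only [hh]; rw [Finset.sum_range_succ]
      rw [h1]
      have : (m : ℝ) + 1 ≠ 0 := by positivity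
      push_cast
      simp
      field_simp
      ring
  rw [key]
  have hS' : (1 : ℝ) ≤ S := by exact_mod_cast hS
  have hlog : log S ≤ h S := by
    have h1 := log_add_one_le_harmonic S
    have h2 : ((harmonic S : ℚ) : ℝ) = h S := by
      simp [harmonic, hh]
    rw [h2] at h1
    refine le_trans (log_le_log (by linarith) ?_) h1
    push_cast; linarith
  have h0 : 0 ≤ log S := log_nonneg hS'
  nlinarith

/-- Two products bounded below by `q` have cross terms with arithmetic mean at least `q`. -/
lemma cross_terms_lower {q A B A' B' : ℝ} (hq : 0 ≤ q) (hA : 0 ≤ A) (hB : 0 ≤ B) (hA' : 0 ≤ A')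
    (hB' : 0 ≤ B') (h : q ≤ A * B) (h' : q ≤ A' * B') : 2 * q ≤ A * B' + A' * B := by
  have h1 : q * q ≤ (A * B') * (A' * B) := by
    calc q * q ≤ (A * B) * (A' * B') := mul_le_mul h h' hq (by positivity)
      _ = _ := by ring
  refine abs_le_of_sq_le_sq' ?_ (by positivity) |>.2
  nlinarith [sq_nonneg (A * B' - A' * B)]

/-- The nodes with index below `n` lying in the `s`-th half-open cell of length `H` from `a`. -/
noncomputable def cellNodes (n : ℕ) (x : ℕ → ℝ) (a H : ℝ) (s : ℕ) : Finset ℕ :=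
  (Finset.range n).filter fun k => a + s * H ≤ x k ∧ x k < a + (s + 1) * H

lemma mem_cellNodes {n : ℕ} {x : ℕ → ℝ} {a H : ℝ} {s k : ℕ} :
    k ∈ cellNodes n x a H s ↔ k < n ∧ a + s * H ≤ x k ∧ x k < a + (s + 1) * H := by
  simp [cellNodes]

/-- On the `s`-th cell, the nodes of the `s'`-th cell contribute at least
`|P(t)| B_{s'} / ((|s - s'| + 1) H)` to the Lebesgue function. -/
lemma lebesgueFn_ge_cells {n : ℕ} (S : ℕ) {x : ℕ → ℝ} {a H : ℝ} (hH : 0 < H)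
    {s : ℕ} {t : ℝ} (ht : t ∈ Set.Icc (a + s * H) (a + (s + 1) * H)) :
    ∑ s' ∈ Finset.range S, |nodePoly n x t| * (∑ k ∈ cellNodes n x a H s', nodeWeight n x k) /
      ((|(s : ℝ) - s'| + 1) * H) ≤ lebesgueFn n x t := by
  have hdisj : ((Finset.range S : Finset ℕ) : Set ℕ).PairwiseDisjoint (cellNodes n x a H) := by
    intro i _ j _ hij
    rw [Function.onFun, Finset.disjoint_left]
    intro k hki hkj
    rw [mem_cellNodes] at hki hkj
    apply hij
    have h1 : (i : ℝ) < j + 1 := by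
      by_contra! h
      have := mul_le_mul_of_nonneg_right h hH.le
      linarith [hki.2.1, hkj.2.2]
    have h2 : (j : ℝ) < i + 1 := by
      by_contra! h
      have := mul_le_mul_of_nonneg_right h hH.le
      linarith [hkj.2.1, hki.2.2]
    have h3 : i < j + 1 := by exact_mod_cast h1
    have h4 : j < i + 1 := by exact_mod_cast h2
    omega
  have hsub : (Finset.range S).biUnion (cellNodes n x a H) ⊆ Finset.range n := by
    intro k hk
    obtain ⟨_, _, h⟩ := Finset.mem_biUnion.1 hk
    exact Finset.mem_range.2 (mem_cellNodes.1 h).1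
  refine le_trans ?_ (Finset.sum_le_sum_of_subset_of_nonneg hsub fun _ _ _ => abs_nonneg _)
  rw [Finset.sum_biUnion hdisj]
  refine Finset.sum_le_sum fun s' _ => ?_
  rw [Finset.mul_sum, Finset.sum_div]
  refine Finset.sum_le_sum fun k hk => ?_
  obtain ⟨hkn, h1, h2⟩ := mem_cellNodes.1 hk
  rw [← abs_basis_mul x hkn, div_le_iff₀ (by positivity)]
  refine mul_le_mul_of_nonneg_left ?_ (abs_nonneg _)
  have h3 := mul_le_mul_of_nonneg_right (le_abs_self ((s : ℝ) - s')) hH.le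
  have h4 := mul_le_mul_of_nonneg_right (neg_abs_le ((s : ℝ) - s')) hH.le
  rw [abs_le]
  constructor <;> nlinarith [ht.1, ht.2]

/-- Summing the cell contributions and pairing the `(s, s')` term with the `(s', s)` term. -/
lemma integral_ge_of_cells {n S : ℕ} {x : ℕ → ℝ} {a H q : ℝ} (hx : StrictMono x) (hH : 0 < H)
    (hq : 0 ≤ q) (hS : 0 < S)
    (hcell : ∀ s < S, q ≤ (∫ t in (a + s * H)..(a + (s + 1) * H), |nodePoly n x t|) *
      ∑ k ∈ cellNodes n x a H s, nodeWeight n x k) :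
    q / H * (2 * S * log S - 3 * S) ≤ ∫ t in a..(a + S * H), lebesgueFn n x t := by
  set A : ℕ → ℝ := fun s => ∫ t in (a + s * H)..(a + (s + 1) * H), |nodePoly n x t| with hA
  set B : ℕ → ℝ := fun s => ∑ k ∈ cellNodes n x a H s, nodeWeight n x k with hB
  have hstep : ∀ s : ℕ, a + s * H ≤ a + (s + 1) * H := fun s => by nlinarith
  have hA0 : ∀ s, 0 ≤ A s := fun s =>
    intervalIntegral.integral_nonneg (hstep s) fun t _ => abs_nonneg _
  have hB0 : ∀ s, 0 ≤ B s := fun s => Finset.sum_nonneg fun k _ => (nodeWeight_pos hx k).le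
  have hsplit : ∫ t in a..(a + S * H), lebesgueFn n x t =
      ∑ s ∈ Finset.range S, ∫ t in (a + s * H)..(a + (s + 1) * H), lebesgueFn n x t := by
    have := intervalIntegral.sum_integral_adjacent_intervals (f := lebesgueFn n x)
      (a := fun s : ℕ => a + s * H) (n := S) (μ := MeasureTheory.volume)
      fun k _ => (continuous_lebesgueFn n x).intervalIntegrable _ _
    simpa using this.symm
  have hrow : ∀ s : ℕ, ∑ s' ∈ Finset.range S, A s * B s' / ((|(s : ℝ) - s'| + 1) * H) ≤
      ∫ t in (a + s * H)..(a + (s + 1) * H), lebesgueFn n x t := by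
    intro s
    have h1 := intervalIntegral.integral_mono_on (hstep s) (f := fun t =>
        ∑ s' ∈ Finset.range S, |nodePoly n x t| * B s' / ((|(s : ℝ) - s'| + 1) * H))
      (μ := MeasureTheory.volume)
      (by
        apply Continuous.intervalIntegrable
        have := continuous_nodePoly n x
        fun_prop)
      ((continuous_lebesgueFn n x).intervalIntegrable _ _)
      fun t ht => lebesgueFn_ge_cells S hH ht
    refine le_trans (le_of_eq ?_) h1
    rw [intervalIntegral.integral_finsetSum]
    · refine Finset.sum_congr rfl fun s' _ => ?_
      rw [intervalIntegral.integral_div, intervalIntegral.integral_mul_const]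
    · intro s' _
      apply Continuous.intervalIntegrable
      have := continuous_nodePoly n x
      fun_prop
  have htotal : ∑ s ∈ Finset.range S, ∑ s' ∈ Finset.range S,
      A s * B s' / ((|(s : ℝ) - s'| + 1) * H) ≤ ∫ t in a..(a + S * H), lebesgueFn n x t := by
    rw [hsplit]
    exact Finset.sum_le_sum fun s _ => hrow s
  have hswap : ∑ s ∈ Finset.range S, ∑ s' ∈ Finset.range S,
      A s * B s' / ((|(s : ℝ) - s'| + 1) * H) = ∑ s ∈ Finset.range S, ∑ s' ∈ Finset.range S,
      A s' * B s / ((|(s : ℝ) - s'| + 1) * H) := by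
    rw [Finset.sum_comm]
    refine Finset.sum_congr rfl fun s _ => Finset.sum_congr rfl fun s' _ => ?_
    rw [abs_sub_comm]
  have hpair : ∑ s ∈ Finset.range S, ∑ s' ∈ Finset.range S,
      2 * (q / H) * (1 / (|(s : ℝ) - s'| + 1)) ≤
      ∑ s ∈ Finset.range S, ∑ s' ∈ Finset.range S, (A s * B s' / ((|(s : ℝ) - s'| + 1) * H) +
        A s' * B s / ((|(s : ℝ) - s'| + 1) * H)) := by
    refine Finset.sum_le_sum fun s hs => Finset.sum_le_sum fun s' hs' => ?_
    have h1 := cross_terms_lower hq (hA0 s) (hB0 s) (hA0 s') (hB0 s')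
      (hcell s (Finset.mem_range.1 hs)) (hcell s' (Finset.mem_range.1 hs'))
    rw [← add_div, le_div_iff₀ (by positivity)]
    refine le_trans (le_of_eq ?_) h1
    field_simp
  simp_rw [Finset.sum_add_distrib, ← Finset.mul_sum] at hpair
  rw [← hswap] at hpair
  have hlast := mul_le_mul_of_nonneg_left (sum_inv_dist S hS) (by positivity : 0 ≤ q / H)
  linarith

/-- If every subinterval of `[a, b]` of length `(b - a) / (S M)` contains a node, then splitting
`[a, b]` into `S` cells gives the expected lower bound with `log S` in place of `log n`. -/
lemma integral_ge_of_dense {ε : ℝ} (hε : 0 < ε) (hε1 : ε < 1) :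
    ∃ M : ℕ, 0 < M ∧ ∀ (n S : ℕ) (x : ℕ → ℝ) (a b : ℝ), StrictMono x → a < b → 0 < S →
      (∀ c, a ≤ c → c + (b - a) / S / M ≤ b → ∃ i < n, c < x i ∧ x i < c + (b - a) / S / M) →
      (1 - ε) * (2 / π ^ 2) * (b - a) * (2 * log S - 3) ≤ ∫ t in a..b, lebesgueFn n x t := by
  obtain ⟨M, hM, h⟩ := cell_lower_bound hε hε1
  refine ⟨M, hM, ?_⟩
  intro n S x a b hx hab hS hdense
  have hS' : (0 : ℝ) < S := by exact_mod_cast hS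
  set H := (b - a) / S with hHdef
  have hH : 0 < H := div_pos (by linarith) hS'
  have hSH : a + S * H = b := by rw [hHdef]; field_simp; ring
  have h1 : 0 ≤ 1 - ε := by linarith
  have key := integral_ge_of_cells (n := n) (S := S) (x := x) (a := a) (H := H)
    (q := (1 - ε) * (2 / π ^ 2) * H ^ 2) hx hH (by positivity) hS (by
      intro s hs
      have e : a + ((s : ℝ) + 1) * H - (a + s * H) = H := by ring
      have := h n x (a + s * H) (a + (s + 1) * H) hx (by linarith) (by
        rw [e]
        intro c hc hc'
        refine hdense c ?_ ?_
        · have : 0 ≤ (s : ℝ) * H := by positivity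
          linarith
        · have h2 : ((s : ℝ) + 1) ≤ S := by exact_mod_cast hs
          have := mul_le_mul_of_nonneg_right h2 hH.le
          linarith)
      rw [e] at this
      convert this using 3
      ext k
      simp [mem_cellNodes])
  rw [hSH] at key
  refine le_trans (le_of_eq ?_) key
  have : b - a = S * H := by linarith
  rw [this]
  field_simp

/-! ### Node-free intervals -/

/-- A node-free interval of length `η` makes the integral exponentially large: in its middle
third every node is at distance at least `η / 3`. -/
lemma integral_ge_of_gap {n m : ℕ} {x : ℕ → ℝ} {a b c η : ℝ} (hx : StrictMono x)
    (hxI : ∀ i < n, x i ∈ Set.Icc (-1 : ℝ) 1) (ha : -1 ≤ a) (hb : b ≤ 1) (hη : 0 < η)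
    (hac : a ≤ c) (hcb : c + η ≤ b) (hfree : ∀ i < n, x i ≤ c ∨ c + η ≤ x i) (hm : 2 * m < n) :
    η / 6 * exp (m * η / 6) ≤ ∫ t in a..b, lebesgueFn n x t := by
  have h1 : ∫ t in (c + η / 3)..(c + 2 * η / 3), cosh (m * (η / 3 / 2)) ≤
      ∫ t in (c + η / 3)..(c + 2 * η / 3), lebesgueFn n x t := by
    refine intervalIntegral.integral_mono_on (by linarith) (by simp)
      ((continuous_lebesgueFn n x).intervalIntegrable _ _) fun t ht => ?_
    refine cosh_le_lebesgueFn hx hxI ⟨by linarith [ht.1], by linarith [ht.2]⟩ (by positivity)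
      (fun i hi => ?_) hm
    rcases hfree i hi with h | h
    · exact le_trans (by linarith [ht.1]) (le_abs_self _)
    · exact le_trans (by linarith [ht.2]) (neg_le_abs _)
  have h2 : ∫ t in (c + η / 3)..(c + 2 * η / 3), lebesgueFn n x t ≤
      ∫ t in a..b, lebesgueFn n x t :=
    intervalIntegral.integral_mono_interval (by linarith) (by linarith) (by linarith)
      (Filter.Eventually.of_forall fun t => lebesgueFn_nonneg n x t)
      ((continuous_lebesgueFn n x).intervalIntegrable _ _)
  refine le_trans ?_ (h1.trans h2)
  rw [intervalIntegral.integral_const, smul_eq_mul, cosh_eq]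
  have e : (m : ℝ) * (η / 3 / 2) = m * η / 6 := by ring
  rw [e]
  have := mul_pos hη (exp_pos (-(m * η / 6)))
  linarith

/-! ### Choice of the number of cells -/

/-- The lower bound for nodes indexed by a strictly increasing sequence of which only the first
`n` terms matter. -/
lemma exists_integral_lebesgueFn_ge (a b : ℝ) (hab : a < b) (ha : -1 ≤ a) (hb : b ≤ 1) (ε : ℝ)
    (hε : 0 < ε) : ∃ N : ℕ, ∀ n : ℕ, N ≤ n → ∀ x : ℕ → ℝ, StrictMono x →
      (∀ i < n, x i ∈ Set.Icc (-1 : ℝ) 1) →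
      4 * (b - a) / π ^ 2 * Real.log n - ε * Real.log n ≤ ∫ t in a..b, lebesgueFn n x t := by
  -- `S = ⌊n ^ (1 - δ)⌋` cells lose only a factor `1 - δ` in the logarithm, while a node-free
  -- interval of length of order `1 / S` is longer than `1 / n` by the power `n ^ δ`.
  set δ : ℝ := min (ε / 4) (1 / 2) with hδ
  have hδ0 : 0 < δ := lt_min (by linarith) (by norm_num)
  have hδ1 : δ ≤ 1 / 2 := min_le_right _ _
  have hδε : δ ≤ ε / 4 := min_le_left _ _
  obtain ⟨M, hM, hdense⟩ := integral_ge_of_dense hδ0 (by linarith)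
  have hM0 : (0 : ℝ) < M := by exact_mod_cast hM
  set c₀ : ℝ := (b - a) / M with hc₀
  have hc₀0 : 0 < c₀ := div_pos (by linarith) hM0
  have E1 : ∀ᶠ n : ℕ in Filter.atTop, 5 / ε ≤ Real.log n :=
    (tendsto_log_atTop.comp tendsto_natCast_atTop_atTop).eventually_ge_atTop _
  have E2 : ∀ᶠ n : ℕ in Filter.atTop, ‖Real.log n‖ ≤ c₀ / 72 * ‖(n : ℝ) ^ δ‖ :=
    tendsto_natCast_atTop_atTop.eventually
      ((isLittleO_log_rpow_atTop hδ0).def (by positivity : 0 < c₀ / 72))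
  have E3 : ∀ᶠ n : ℕ in Filter.atTop, 6 / c₀ ≤ (n : ℝ) :=
    tendsto_natCast_atTop_atTop.eventually_ge_atTop _
  obtain ⟨N, hN⟩ := Filter.eventually_atTop.1
    (E1.and (E2.and (E3.and (Filter.eventually_ge_atTop 4))))
  refine ⟨N, fun n hn x hx hxI => ?_⟩
  obtain ⟨h1, h2, h3, h4⟩ := hN n hn
  have hn4 : (4 : ℝ) ≤ n := by exact_mod_cast h4
  have hn0 : (0 : ℝ) < n := by linarith
  have hL0 : 0 ≤ Real.log n := log_nonneg (by linarith)
  rw [div_le_iff₀ hε] at h1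
  rw [div_le_iff₀ hc₀0] at h3
  rw [norm_of_nonneg hL0, norm_of_nonneg (by positivity)] at h2
  set R : ℝ := (n : ℝ) ^ (1 - δ) with hR
  have hR1 : 1 ≤ R := one_le_rpow (by linarith) (by linarith)
  set S : ℕ := ⌊R⌋₊ with hSdef
  have hS : 0 < S := Nat.floor_pos.2 hR1
  have hS1 : (1 : ℝ) ≤ S := by exact_mod_cast hS
  have hSR : (S : ℝ) ≤ R := Nat.floor_le (by linarith)
  have hRS : R < S + 1 := Nat.lt_floor_add_one R
  set q : ℝ := 4 * (b - a) / π ^ 2 with hq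
  have hq0 : 0 ≤ q := div_nonneg (by linarith) (by positivity)
  have hq1 : q ≤ 1 := by
    rw [hq, div_le_one (by positivity)]
    nlinarith [pi_gt_three]
  by_cases hd : ∀ c, a ≤ c → c + (b - a) / S / M ≤ b →
      ∃ i < n, c < x i ∧ x i < c + (b - a) / S / M
  · refine le_trans ?_ (hdense n S x a b hx hab hS hd)
    have hlogS : (1 - δ) * Real.log n - 1 ≤ Real.log S := by
      have e1 : Real.log (R / 2) = (1 - δ) * Real.log n - Real.log 2 := by
        rw [log_div (by linarith) (by norm_num), hR, log_rpow hn0]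
      have e2 : Real.log (R / 2) ≤ Real.log S := log_le_log (by linarith) (by linarith)
      linarith [log_two_lt_d9]
    have e3 : (1 - δ) * (2 / π ^ 2) * (b - a) * (2 * Real.log S - 3) =
        (1 - δ) * q * (Real.log S - 3 / 2) := by
      rw [hq]; ring
    rw [e3]
    have e4 : (1 - δ) * q * ((1 - δ) * Real.log n - 5 / 2) ≤ (1 - δ) * q * (Real.log S - 3 / 2) :=
      mul_le_mul_of_nonneg_left (by linarith) (mul_nonneg (by linarith) hq0)
    refine le_trans ?_ e4
    have e5 : q * (δ * Real.log n) ≤ δ * Real.log n :=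
      mul_le_of_le_one_left (by positivity) hq1
    have e6 : δ * Real.log n ≤ ε / 4 * Real.log n := mul_le_mul_of_nonneg_right hδε hL0
    have e7 : 0 ≤ q * (δ ^ 2 * Real.log n) := by positivity
    have e8 : 0 ≤ δ * q := by positivity
    linarith
  · push Not at hd
    obtain ⟨c, hac, hcb, hfree⟩ := hd
    set η : ℝ := (b - a) / S / M with hη
    have hηc : η = c₀ / S := by rw [hη, hc₀, div_right_comm]
    have hη0 : 0 < η := by rw [hηc]; positivity
    have hηR : c₀ * (n : ℝ) ^ δ ≤ η * n := by
      have e : (n : ℝ) ^ δ * R = n := by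
        rw [hR, ← rpow_add hn0]; simp
      have hSη : η * S = c₀ := by rw [hηc]; field_simp
      calc c₀ * (n : ℝ) ^ δ = η * ((n : ℝ) ^ δ * S) := by rw [← hSη]; ring
        _ ≤ η * ((n : ℝ) ^ δ * R) := by gcongr
        _ = η * n := by rw [e]
    have hbig := integral_ge_of_gap (m := (n - 1) / 2) hx hxI ha hb hη0 hac hcb
      (fun i hi => by
        by_cases h : x i ≤ c
        · exact Or.inl h
        · exact Or.inr (hfree i hi (not_le.1 h))) (by omega)
    refine le_trans ?_ hbig
    have hm : (n : ℝ) / 4 ≤ ((n - 1) / 2 : ℕ) := by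
      rw [div_le_iff₀ (by norm_num)]
      exact_mod_cast (by omega : n ≤ (n - 1) / 2 * 4)
    have hexp : (n : ℝ) ^ 3 ≤ exp (((n - 1) / 2 : ℕ) * η / 6) := by
      have e : (n : ℝ) ^ 3 = exp (3 * Real.log n) := by
        rw [mul_comm, exp_mul, exp_log hn0]; norm_cast
      rw [e, exp_le_exp]
      have := mul_le_mul_of_nonneg_right hm hη0.le
      linarith
    have hone : 1 ≤ (n : ℝ) ^ δ := one_le_rpow (by linarith) hδ0.le
    have hηn : c₀ ≤ η * n := le_trans (le_mul_of_one_le_right hc₀0.le hone) hηR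
    calc q * Real.log n - ε * Real.log n ≤ 1 * Real.log n := by
          have := mul_le_mul_of_nonneg_right hq1 hL0
          have : 0 ≤ ε * Real.log n := by positivity
          linarith
      _ ≤ n := by linarith [log_le_sub_one_of_pos hn0]
      _ ≤ η / 6 * (n : ℝ) ^ 3 := by
          have f1 : 6 ≤ η * n * n := by
            have := mul_le_mul_of_nonneg_right hηn hn0.le
            linarith
          have f2 := mul_le_mul_of_nonneg_right f1 hn0.le
          linarith
      _ ≤ _ := by gcongr

/-- Extension of a finite node family in `[-1, 1]` to a sequence; the added values `2 + k` lie to the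
right of `[-1, 1]`, so the sequence is strictly increasing. -/
noncomputable def extendNodes {n : ℕ} (x : Fin n → ℝ) (k : ℕ) : ℝ :=
  if h : k < n then x ⟨k, h⟩ else 2 + k

lemma extendNodes_val {n : ℕ} (x : Fin n → ℝ) (k : Fin n) : extendNodes x k = x k := by
  simp [extendNodes]

lemma strictMono_extendNodes {n : ℕ} {x : Fin n → ℝ} (hx : StrictMono x)
    (hxI : ∀ i, x i ∈ Set.Icc (-1 : ℝ) 1) : StrictMono (extendNodes x) := by
  intro k l hkl
  have hkl' : (k : ℝ) < l := by exact_mod_cast hkl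
  unfold extendNodes
  split_ifs with hk hl hl
  · exact hx hkl
  · have h1 := (hxI ⟨k, hk⟩).2
    have h2 : (0 : ℝ) ≤ l := Nat.cast_nonneg l
    linarith
  · omega
  · linarith

lemma lebesgueFn_extendNodes {n : ℕ} (x : Fin n → ℝ) (t : ℝ) :
    lebesgueFn n (extendNodes x) t =
      ∑ k : Fin n, |∏ i ∈ Finset.univ.erase k, (t - x i) / (x k - x i)| := by
  unfold lebesgueFn
  rw [← Fin.sum_univ_eq_sum_range fun k =>
    |∏ i ∈ (Finset.range n).erase k, (t - extendNodes x i) / (extendNodes x k - extendNodes x i)|]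
  refine Finset.sum_congr rfl fun k _ => ?_
  have e : (Finset.range n).erase k = (Finset.univ.erase k).map Fin.valEmbedding := by
    rw [Finset.map_erase, Fin.map_valEmbedding_univ, Nat.Iio_eq_range]
    rfl
  rw [e, Finset.prod_map]
  simp [extendNodes_val]

/-- **Integral lower bound for the Lebesgue function.** For any fixed closed interval
`I = [a,b] ⊆ [-1,1]` of positive length and any `ε > 0` there is `N = N(I, ε)` such that
for any `n ≥ N` and any distinct nodes `x 0 < ⋯ < x (n-1)` in `[-1,1]`, the integral over
`I` of the Lebesgue function `λ(t) = ∑ k, |∏_{i ≠ k} (t - x i)/(x k - x i)|` is at least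
`(4 |I| / π²) log n - ε log n`. -/
theorem integral_lebesgue_function_lower_bound (a b : ℝ) (hab : a < b)
    (ha : -1 ≤ a) (hb : b ≤ 1) (ε : ℝ) (hε : 0 < ε) :
    ∃ N : ℕ, ∀ n : ℕ, N ≤ n → ∀ x : Fin n → ℝ,
      StrictMono x → (∀ i, x i ∈ Set.Icc (-1 : ℝ) 1) →
      4 * (b - a) / π ^ 2 * Real.log n - ε * Real.log n ≤
        ∫ t in a..b, ∑ k : Fin n,
          |∏ i ∈ Finset.univ.erase k, (t - x i) / (x k - x i)| := by
  obtain ⟨N, hN⟩ := exists_integral_lebesgueFn_ge a b hab ha hb ε hε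
  refine ⟨N, fun n hn x hx hxI => ?_⟩
  simp_rw [← lebesgueFn_extendNodes]
  refine hN n hn _ (strictMono_extendNodes hx hxI) fun i hi => ?_
  rw [show extendNodes x i = x ⟨i, hi⟩ from extendNodes_val x ⟨i, hi⟩]
  exact hxI _
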